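/- arXiv:1710.10627 — 2 statements merged into one kernel-verified Lean document; each statement's English description precedes it below -/
import Mathlib

section
/- Assume AN = N (N is U-principal), S ξ = 0 (i.e. α = 0), and the Hopf identity with α = 0. Then SφSX = φX for all X ∈ T, and Ric*(X,Y) = (2m-1)(g(X,Y) - η(X)η(Y)) for all X, Y ∈ T (equation (20) of the paper); in particular Ric*(X,Y) = (2m-1) g(X,Y) whenever X, Y ∈ T are orthogonal to ξ, so the model is star-Einstein. -/
open RealInnerProductSpace

/-! When `A N = N`, every `A`-term of the Hopf identity has a factor pairing a tangent vector with
`N`, so the identity says that `S φ S X - φ X` is orthogonal to the tangent space. This vector is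
itself tangent, hence zero. The star-Ricci form thereby collapses to `-(2m - 1) ⟪φ² X, Y⟫`, and
`φ² = -1 + η ⊗ ξ` on tangent vectors. -/

section Hypersurface

variable {V : Type*} [NormedAddCommGroup V] [InnerProductSpace ℝ V]

/-- The Reeb vector `ξ` of a real hypersurface with unit normal `N` in a space with Kähler
structure `J`. The contact form `η` is not named separately: it is `fun X ↦ ⟪X, reebVector J N⟫`. -/
def reebVector (J : V →ₗ[ℝ] V) (N : V) : V := -(J N)

/-- The almost contact structure tensor `φ` induced by `J` on a real hypersurface with unit normal
`N`, extended to the whole ambient space by the formula that defines it on tangent vectors. -/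
noncomputable def structureTensor (J : V →ₗ[ℝ] V) (N : V) : V →ₗ[ℝ] V :=
  J - (innerₗ V (reebVector J N)).smulRight N

/-- The expression whose vanishing on tangent vectors is the Hopf identity with Reeb function
`α = 0`, for the conjugation `A` and the shape operator `S`. -/
noncomputable def hopfForm (J : V →ₗ[ℝ] V) (A : V → V) (N : V) (S : V → V) (X Y : V) : ℝ :=
  2 * ⟪S (structureTensor J N (S X)), Y⟫ - 2 * ⟪structureTensor J N X, Y⟫
    + 2 * ⟪X, A N⟫ * ⟪Y, A (reebVector J N)⟫ - 2 * ⟪Y, A N⟫ * ⟪X, A (reebVector J N)⟫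
    + 2 * ⟪reebVector J N, A (reebVector J N)⟫ *
      (⟪Y, A N⟫ * ⟪X, reebVector J N⟫ - ⟪X, A N⟫ * ⟪Y, reebVector J N⟫)

/-- The star-Ricci form of a real hypersurface in the complex quadric `Q^m`, for the conjugation `A`
and the shape operator `S`. The complex dimension `m` enters only as a real coefficient. -/
noncomputable def starRicciForm (m : ℝ) (J : V →ₗ[ℝ] V) (A : V → V) (N : V) (S : V → V)
    (X Y : V) : ℝ :=
  -2 * (m - 1) * ⟪structureTensor J N (structureTensor J N X), Y⟫
    - 2 * ⟪A N, X⟫ * ⟪A N, Y⟫ - ⟪structureTensor J N (S (structureTensor J N (S X))), Y⟫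

variable {J : V →ₗ[ℝ] V} {A S : V → V} {N X Y : V}

theorem structureTensor_apply (J : V →ₗ[ℝ] V) (N X : V) :
    structureTensor J N X = J X - ⟪X, reebVector J N⟫ • N := by
  simp [structureTensor, real_inner_comm X]

theorem inner_map_left_eq_neg_of_isometry (hJiso : ∀ x y : V, ⟪J x, J y⟫ = ⟪x, y⟫)
    (hJ2 : ∀ x : V, J (J x) = -x) (X Y : V) : ⟪J X, Y⟫ = -⟪X, J Y⟫ := by
  rw [← hJiso (J X) Y, hJ2, inner_neg_left]

theorem inner_structureTensor_normal (hJiso : ∀ x y : V, ⟪J x, J y⟫ = ⟪x, y⟫)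
    (hJ2 : ∀ x : V, J (J x) = -x) (hN : ‖N‖ = 1) (X : V) :
    ⟪structureTensor J N X, N⟫ = 0 := by
  rw [structureTensor_apply, reebVector, inner_sub_left, real_inner_smul_left, inner_neg_right,
    inner_map_left_eq_neg_of_isometry hJiso hJ2, inner_self_eq_one_of_norm_eq_one hN, mul_one,
    sub_self]

theorem inner_normal_reebVector (hJiso : ∀ x y : V, ⟪J x, J y⟫ = ⟪x, y⟫)
    (hJ2 : ∀ x : V, J (J x) = -x) (N : V) : ⟪N, reebVector J N⟫ = 0 := by
  have hskew := inner_map_left_eq_neg_of_isometry hJiso hJ2 N N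
  rw [real_inner_comm] at hskew
  rw [reebVector, inner_neg_right]
  linarith

theorem inner_structureTensor_reebVector (hJiso : ∀ x y : V, ⟪J x, J y⟫ = ⟪x, y⟫)
    (hJ2 : ∀ x : V, J (J x) = -x) (N X : V) :
    ⟪structureTensor J N X, reebVector J N⟫ = -⟪X, N⟫ := by
  rw [structureTensor_apply, inner_sub_left, real_inner_smul_left,
    inner_normal_reebVector hJiso hJ2, mul_zero, sub_zero, reebVector, inner_neg_right, hJiso]

theorem structureTensor_structureTensor (hJiso : ∀ x y : V, ⟪J x, J y⟫ = ⟪x, y⟫)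
    (hJ2 : ∀ x : V, J (J x) = -x) (N X : V) :
    structureTensor J N (structureTensor J N X) =
      -X + ⟪X, reebVector J N⟫ • reebVector J N + ⟪X, N⟫ • N := by
  rw [structureTensor_apply J N (structureTensor J N X),
    inner_structureTensor_reebVector hJiso hJ2, structureTensor_apply, map_sub, map_smul, hJ2,
    reebVector]
  module

theorem inner_structureTensor_structureTensor (hJiso : ∀ x y : V, ⟪J x, J y⟫ = ⟪x, y⟫)
    (hJ2 : ∀ x : V, J (J x) = -x) (hX : ⟪X, N⟫ = 0) (Y : V) :
    ⟪structureTensor J N (structureTensor J N X), Y⟫ =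
      -(⟪X, Y⟫ - ⟪X, reebVector J N⟫ * ⟪Y, reebVector J N⟫) := by
  rw [structureTensor_structureTensor hJiso hJ2, hX, zero_smul, add_zero, inner_add_left,
    inner_neg_left, real_inner_smul_left, real_inner_comm Y (reebVector J N)]
  ring

theorem hopfForm_eq_of_map_normal (hAN : A N = N) (hX : ⟪X, N⟫ = 0) (hY : ⟪Y, N⟫ = 0) :
    hopfForm J A N S X Y =
      2 * ⟪S (structureTensor J N (S X)) - structureTensor J N X, Y⟫ := by
  rw [hopfForm, hAN, hX, hY, inner_sub_left]
  ring

theorem shape_structureTensor_shape_of_hopfForm_eq_zero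
    (hJiso : ∀ x y : V, ⟪J x, J y⟫ = ⟪x, y⟫) (hJ2 : ∀ x : V, J (J x) = -x) (hN : ‖N‖ = 1)
    (hST : ∀ X : V, ⟪X, N⟫ = 0 → ⟪S X, N⟫ = 0) (hAN : A N = N) (hX : ⟪X, N⟫ = 0)
    (hHopf : ∀ Y : V, ⟪Y, N⟫ = 0 → hopfForm J A N S X Y = 0) :
    S (structureTensor J N (S X)) = structureTensor J N X := by
  have hφT := inner_structureTensor_normal hJiso hJ2 hN
  have htangent : ⟪S (structureTensor J N (S X)) - structureTensor J N X, N⟫ = 0 := by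
    rw [inner_sub_left, hST _ (hφT _), hφT, sub_zero]
  have hself := hHopf _ htangent
  rw [hopfForm_eq_of_map_normal hAN hX htangent] at hself
  exact sub_eq_zero.mp (inner_self_eq_zero.mp ((mul_eq_zero_iff_left two_ne_zero).mp hself))

theorem starRicciForm_eq_of_shape_structureTensor_shape (m : ℝ)
    (hJiso : ∀ x y : V, ⟪J x, J y⟫ = ⟪x, y⟫) (hJ2 : ∀ x : V, J (J x) = -x) (hAN : A N = N)
    (hX : ⟪X, N⟫ = 0) (hS : S (structureTensor J N (S X)) = structureTensor J N X) (Y : V) :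
    starRicciForm m J A N S X Y =
      (2 * m - 1) * (⟪X, Y⟫ - ⟪X, reebVector J N⟫ * ⟪Y, reebVector J N⟫) := by
  rw [starRicciForm, hS, hAN, real_inner_comm X N, hX,
    inner_structureTensor_structureTensor hJiso hJ2 hX]
  ring

end Hypersurface

theorem stmt10_general {V : Type*} [NormedAddCommGroup V] [InnerProductSpace ℝ V]
    (m : ℝ) (J : V →ₗ[ℝ] V)
    (hJiso : ∀ x y : V, ⟪J x, J y⟫ = ⟪x, y⟫)
    (hJ2 : ∀ x : V, J (J x) = -x)
    (A : V → V)
    (N : V) (hN : ‖N‖ = 1)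
    (ξ : V) (hξ : ξ = -(J N))
    (η : V → ℝ) (hη : ∀ X : V, η X = ⟪X, ξ⟫)
    (φ : V → V) (hφ : ∀ X : V, φ X = J X - η X • N)
    (S : V → V)
    (hST : ∀ X : V, ⟪X, N⟫ = 0 → ⟪S X, N⟫ = 0)
    (hAN : A N = N)
    (hHopf : ∀ X Y : V, ⟪X, N⟫ = 0 → ⟪Y, N⟫ = 0 →
      2 * ⟪S (φ (S X)), Y⟫ - 2 * ⟪φ X, Y⟫
        + 2 * ⟪X, A N⟫ * ⟪Y, A ξ⟫ - 2 * ⟪Y, A N⟫ * ⟪X, A ξ⟫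
        + 2 * ⟪ξ, A ξ⟫ * (⟪Y, A N⟫ * η X - ⟪X, A N⟫ * η Y) = 0)
    (Ric : V → V → ℝ)
    (hRic : ∀ X Y : V, ⟪X, N⟫ = 0 → ⟪Y, N⟫ = 0 →
      Ric X Y = -2 * (m - 1) * ⟪φ (φ X), Y⟫
        - 2 * ⟪A N, X⟫ * ⟪A N, Y⟫ - ⟪φ (S (φ (S X))), Y⟫) :
    (∀ X : V, ⟪X, N⟫ = 0 → S (φ (S X)) = φ X) ∧
    (∀ X Y : V, ⟪X, N⟫ = 0 → ⟪Y, N⟫ = 0 →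
      Ric X Y = (2 * m - 1) * (⟪X, Y⟫ - η X * η Y)) ∧
    (∀ X Y : V, ⟪X, N⟫ = 0 → ⟪Y, N⟫ = 0 → ⟪X, ξ⟫ = 0 →
      Ric X Y = (2 * m - 1) * ⟪X, Y⟫) := by
  obtain rfl : ξ = reebVector J N := hξ
  obtain rfl : η = fun X ↦ ⟪X, reebVector J N⟫ := funext hη
  obtain rfl : φ = structureTensor J N :=
    funext fun X ↦ (hφ X).trans (structureTensor_apply J N X).symm
  have hSφS : ∀ X : V, ⟪X, N⟫ = 0 → S (structureTensor J N (S X)) = structureTensor J N X :=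
    fun X hX ↦ shape_structureTensor_shape_of_hopfForm_eq_zero hJiso hJ2 hN hST hAN hX
      fun Y hY ↦ hHopf X Y hX hY
  have hRicT : ∀ X Y : V, ⟪X, N⟫ = 0 → ⟪Y, N⟫ = 0 →
      Ric X Y = (2 * m - 1) * (⟪X, Y⟫ - ⟪X, reebVector J N⟫ * ⟪Y, reebVector J N⟫) :=
    fun X Y hX hY ↦ (hRic X Y hX hY).trans
      (starRicciForm_eq_of_shape_structureTensor_shape m hJiso hJ2 hAN hX (hSφS X hX) Y)
  refine ⟨hSφS, hRicT, fun X Y hX hY hXξ ↦ ?_⟩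
  rw [hRicT X Y hX hY, hXξ, zero_mul, sub_zero]

theorem stmt10 {V : Type*} [NormedAddCommGroup V] [InnerProductSpace ℝ V]
    [FiniteDimensional ℝ V]
    (m : ℕ) (hm : 3 ≤ m) (hdim : Module.finrank ℝ V = 2 * m)
    (J : V →ₗ[ℝ] V)
    (hJiso : ∀ x y : V, ⟪J x, J y⟫ = ⟪x, y⟫)
    (hJ2 : ∀ x : V, J (J x) = -x)
    (A : V →ₗ[ℝ] V)
    (hAsa : ∀ x y : V, ⟪A x, y⟫ = ⟪x, A y⟫)
    (hA2 : ∀ x : V, A (A x) = x)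
    (hAJ : ∀ x : V, A (J x) = -(J (A x)))
    (N : V) (hN : ‖N‖ = 1)
    (ξ : V) (hξ : ξ = -(J N))
    (η : V → ℝ) (hη : ∀ X : V, η X = ⟪X, ξ⟫)
    (φ : V → V) (hφ : ∀ X : V, φ X = J X - η X • N)
    (S : V →ₗ[ℝ] V)
    (hST : ∀ X : V, ⟪X, N⟫ = 0 → ⟪S X, N⟫ = 0)
    (hSsa : ∀ X Y : V, ⟪X, N⟫ = 0 → ⟪Y, N⟫ = 0 → ⟪S X, Y⟫ = ⟪X, S Y⟫)
    (hAN : A N = N) (hSξ : S ξ = 0)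
    (hHopf : ∀ X Y : V, ⟪X, N⟫ = 0 → ⟪Y, N⟫ = 0 →
      2 * ⟪S (φ (S X)), Y⟫ - 2 * ⟪φ X, Y⟫
        + 2 * ⟪X, A N⟫ * ⟪Y, A ξ⟫ - 2 * ⟪Y, A N⟫ * ⟪X, A ξ⟫
        + 2 * ⟪ξ, A ξ⟫ * (⟪Y, A N⟫ * η X - ⟪X, A N⟫ * η Y) = 0)
    (Ric : V → V → ℝ)
    (hRic : ∀ X Y : V, ⟪X, N⟫ = 0 → ⟪Y, N⟫ = 0 →
      Ric X Y = -2 * ((m : ℝ) - 1) * ⟪φ (φ X), Y⟫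
        - 2 * ⟪A N, X⟫ * ⟪A N, Y⟫ - ⟪φ (S (φ (S X))), Y⟫)
    :
    (∀ X : V, ⟪X, N⟫ = 0 → S (φ (S X)) = φ X) ∧
    (∀ X Y : V, ⟪X, N⟫ = 0 → ⟪Y, N⟫ = 0 →
      Ric X Y = (2 * (m : ℝ) - 1) * (⟪X, Y⟫ - η X * η Y)) ∧
    (∀ X Y : V, ⟪X, N⟫ = 0 → ⟪Y, N⟫ = 0 → ⟪X, ξ⟫ = 0 → ⟪Y, ξ⟫ = 0 →
      Ric X Y = (2 * (m : ℝ) - 1) * ⟪X, Y⟫) := by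
  have ⟨hSφS, hRicT, hEinstein⟩ :=
    stmt10_general m J hJiso hJ2 A N hN ξ hξ η hη φ hφ S hST hAN hHopf Ric hRic
  exact ⟨hSφS, hRicT, fun X Y hX hY hXξ _ ↦ hEinstein X Y hX hY hXξ⟩
end

section
/- (Identity used in Section 5 of the paper.) Assume g(AN, N) = 0 and g(AN, ξ) = 0 (N is U-isotropic), Sξ = αξ for a real number α, and equation (23) of the paper: SφSX = (α/2)(φS + Sφ)X + φX - g(X, AN)·Aξ + g(X, Aξ)·AN for all X ∈ T. Then SφSX + φSφSφX = 0 for all X ∈ T. -/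
open RealInnerProductSpace

/-!
On the tangent space `T = Nᗮ` the tensor `φ` is an `f`-structure: `φ ^ 3 = -φ`. The claim says that
`S φ S` lies in the linear space of endomorphisms `K` with `φ K φ = -K`, so it is enough to check
this for each term on the right-hand side of the equation for `S φ S`. For `φ` it is `φ ^ 3 = -φ`.
For `φ S + S φ` it holds because `S` commutes with `φ ^ 2 = ⟪·, ξ⟫ ξ - 1`, the vector `ξ` being an
eigenvector of the symmetric map `S`. The remaining rank-two term is the infinitesimal rotation of
the plane spanned by `W = A N` and `φ W = A ξ`; this plane is orthogonal to `ξ`, and `φ` acts on it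
as a complex structure.
-/

section HorizontalCommutant

variable (R : Type*) {A : Type*} [CommRing R] [Ring A] [Algebra R A]

/-- The submodule of all `x` with `f * x * f = -x`. If `f ^ 3 = -f`, then `-f ^ 2` is idempotent and
these are the elements of the corner `f ^ 2 * A * f ^ 2` that commute with `f`. For the structure
tensor of an almost contact structure they are the complex linear endomorphisms of the horizontal
space, extended by zero on the Reeb vector. -/
def horizontalCommutant (f : A) : Submodule R A :=
  LinearMap.ker (LinearMap.mulLeftRight R (f, f) + LinearMap.id)

variable {R} {f s x : A}

theorem mem_horizontalCommutant : x ∈ horizontalCommutant R f ↔ f * x * f = -x := by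
  simp [horizontalCommutant, add_eq_zero_iff_eq_neg]

theorem self_mem_horizontalCommutant (hf : f ^ 3 = -f) : f ∈ horizontalCommutant R f := by
  rw [mem_horizontalCommutant, ← pow_three', hf]

theorem mul_add_mul_mem_horizontalCommutant (hf : f ^ 3 = -f) (hs : Commute s (f ^ 2)) :
    f * s + s * f ∈ horizontalCommutant R f := by
  rw [mem_horizontalCommutant]
  calc f * (f * s + s * f) * f = f ^ 2 * s * f + f * (s * f ^ 2) := by noncomm_ring
    _ = s * f ^ 2 * f + f * (f ^ 2 * s) := by rw [hs.eq]
    _ = s * f ^ 3 + f ^ 3 * s := by noncomm_ring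
    _ = -(f * s + s * f) := by rw [hf]; noncomm_ring

end HorizontalCommutant

section InnerWedge

variable {E : Type*} [NormedAddCommGroup E] [InnerProductSpace ℝ E]

/-- The skew-adjoint endomorphism attached to the bivector `v ∧ w`, with the sign for which it maps
`w` to `v` and `v` to `-w` when `v` and `w` are orthonormal. -/
noncomputable def innerWedge (v w : E) : Module.End ℝ E :=
  (InnerProductSpace.rankOne ℝ v w - InnerProductSpace.rankOne ℝ w v).toLinearMap

theorem innerWedge_apply (v w x : E) : innerWedge v w x = ⟪w, x⟫ • v - ⟪v, x⟫ • w := rfl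

theorem innerWedge_mem_horizontalCommutant {f : Module.End ℝ E}
    (hf : ∀ x y, ⟪f x, y⟫ = -⟪x, f y⟫) {w : E} (hw : f (f w) = -w) :
    innerWedge w (f w) ∈ horizontalCommutant ℝ f := by
  rw [mem_horizontalCommutant]
  ext x
  have hwx : ⟪w, f x⟫ = -⟪f w, x⟫ := by rw [hf, neg_neg]
  have hfwx : ⟪f w, f x⟫ = ⟪w, x⟫ := by rw [← neg_inj, ← hf, hw, inner_neg_left]
  simp only [Module.End.mul_apply, LinearMap.neg_apply, innerWedge_apply, map_sub, map_smul,
    hwx, hfwx, hw]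
  module

end InnerWedge

section AlmostContactMetric

variable {E : Type*} [NormedAddCommGroup E] [InnerProductSpace ℝ E]

/-- An almost contact metric structure on an inner product space, with structure tensor `φ`, Reeb
vector `ξ` and contact form `⟪·, ξ⟫`. Compatibility with the metric is expressed by `φ` being
skew-adjoint, which is equivalent to `⟪φ x, φ y⟫ = ⟪x, y⟫ - ⟪x, ξ⟫ * ⟪y, ξ⟫`. -/
structure IsAlmostContactMetric (φ : Module.End ℝ E) (ξ : E) : Prop where
  inner_reeb_self : ⟪ξ, ξ⟫ = 1
  apply_apply : ∀ x, φ (φ x) = ⟪x, ξ⟫ • ξ - x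
  inner_apply_left : ∀ x y, ⟪φ x, y⟫ = -⟪x, φ y⟫

namespace IsAlmostContactMetric

variable {φ S : Module.End ℝ E} {ξ w : E}

theorem apply_reeb (h : IsAlmostContactMetric φ ξ) : φ ξ = 0 := by
  have hsq : φ (φ ξ) = 0 := by
    rw [h.apply_apply, h.inner_reeb_self, one_smul, sub_self]
  rw [← inner_self_eq_zero (𝕜 := ℝ), h.inner_apply_left, hsq, inner_zero_right, neg_zero]

theorem pow_three_eq_neg (h : IsAlmostContactMetric φ ξ) : φ ^ 3 = -φ := by
  ext x
  simp only [pow_three, Module.End.mul_apply, LinearMap.neg_apply]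
  rw [h.apply_apply x, map_sub, map_smul, h.apply_reeb, smul_zero, zero_sub]

theorem commute_sq (h : IsAlmostContactMetric φ ξ) (hS : S.IsSymmetric) {α : ℝ}
    (hSξ : S ξ = α • ξ) : Commute S (φ ^ 2) := by
  ext x
  have hSx : ⟪S x, ξ⟫ = α * ⟪x, ξ⟫ := by rw [hS x ξ, hSξ, real_inner_smul_right]
  simp only [pow_two, Module.End.mul_apply, h.apply_apply, map_sub, map_smul, hSξ, hSx]
  module

theorem mul_mul_mem_horizontalCommutant (h : IsAlmostContactMetric φ ξ) (hS : S.IsSymmetric)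
    {α : ℝ} (hSξ : S ξ = α • ξ) (hw : ⟪w, ξ⟫ = 0) {a b c : ℝ}
    (hSφS : S * φ * S = a • (φ * S + S * φ) + b • φ + c • innerWedge w (φ w)) :
    S * φ * S ∈ horizontalCommutant ℝ φ := by
  have hφ3 : φ ^ 3 = -φ := h.pow_three_eq_neg
  have hφw : φ (φ w) = -w := by rw [h.apply_apply, hw, zero_smul, zero_sub]
  rw [hSφS]
  refine add_mem (add_mem (Submodule.smul_mem _ a ?_) (Submodule.smul_mem _ b ?_))
    (Submodule.smul_mem _ c ?_)
  · exact mul_add_mul_mem_horizontalCommutant hφ3 (h.commute_sq hS hSξ)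
  · exact self_mem_horizontalCommutant hφ3
  · exact innerWedge_mem_horizontalCommutant h.inner_apply_left hφw

end IsAlmostContactMetric

end AlmostContactMetric

section Compression

variable {𝕜 V : Type*} [RCLike 𝕜] [NormedAddCommGroup V] [InnerProductSpace 𝕜 V]

/-- The compression of a linear map `f` to a subspace `K`: restrict `f` to `K`, then project
orthogonally back to `K`. The compression of the Kähler structure to the tangent space of a
hypersurface is the induced structure tensor. -/
noncomputable def compression (K : Submodule 𝕜 V) [K.HasOrthogonalProjection] (f : V →ₗ[𝕜] V) :
    Module.End 𝕜 K :=
  K.orthogonalProjectionOnto.toLinearMap ∘ₗ f ∘ₗ K.subtype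

theorem inner_compression_left {K : Submodule 𝕜 V} [K.HasOrthogonalProjection] {f : V →ₗ[𝕜] V}
    (hf : ∀ x y, inner 𝕜 (f x) y = -inner 𝕜 x (f y)) (x y : K) :
    inner 𝕜 (compression K f x) y = -inner 𝕜 x (compression K f y) := by
  simp [compression, hf]

theorem coe_compression_orthogonal_singleton {N : V} (hN : ‖N‖ = 1) (f : V →ₗ[𝕜] V)
    (x : (𝕜 ∙ N)ᗮ) :
    (compression (𝕜 ∙ N)ᗮ f x : V) = f x - inner 𝕜 N (f x) • N := by
  rw [← Submodule.starProjection_unit_singleton 𝕜 hN, ← Submodule.starProjection_orthogonal_val]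
  rfl

end Compression

section Hypersurface

variable {V : Type*} [NormedAddCommGroup V] [InnerProductSpace ℝ V]

theorem inner_apply_left_of_isometry_of_sq_eq_neg {J : V → V}
    (hJiso : ∀ x y, ⟪J x, J y⟫ = ⟪x, y⟫) (hJ2 : ∀ x, J (J x) = -x) (x y : V) :
    ⟪J x, y⟫ = -⟪x, J y⟫ := by
  rw [← hJiso x (J y), hJ2, inner_neg_right, neg_neg]

theorem inner_apply_self_eq_zero_of_skew {J : V → V} (hJ : ∀ x y, ⟪J x, y⟫ = -⟪x, J y⟫)
    (x : V) : ⟪J x, x⟫ = 0 := by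
  rw [← self_eq_neg]
  simpa only [real_inner_comm] using hJ x x

variable {J : V →ₗ[ℝ] V}

theorem coe_compression_eq_sub_inner_reeb (hJ : ∀ x y, ⟪J x, y⟫ = -⟪x, J y⟫) {N : V}
    (hN : ‖N‖ = 1) (x : (ℝ ∙ N)ᗮ) :
    (compression (ℝ ∙ N)ᗮ J x : V) = J x - ⟪(x : V), -J N⟫ • N := by
  rw [coe_compression_orthogonal_singleton hN, real_inner_comm, hJ, inner_neg_right]

theorem isAlmostContactMetric_compression (hJiso : ∀ x y, ⟪J x, J y⟫ = ⟪x, y⟫)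
    (hJ2 : ∀ x, J (J x) = -x) {N : V} (hN : ‖N‖ = 1) {ξ : (ℝ ∙ N)ᗮ} (hξ : (ξ : V) = -J N) :
    IsAlmostContactMetric (compression (ℝ ∙ N)ᗮ J) ξ := by
  have hJ := inner_apply_left_of_isometry_of_sq_eq_neg hJiso hJ2
  have hφ (x : (ℝ ∙ N)ᗮ) : (compression (ℝ ∙ N)ᗮ J x : V) = J x - ⟪x, ξ⟫ • N := by
    rw [coe_compression_eq_sub_inner_reeb hJ hN, ← hξ, Submodule.coe_inner]
  have hJξ : J ξ = N := by rw [hξ, map_neg, hJ2, neg_neg]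
  have hξξ : ⟪ξ, ξ⟫ = 1 := by
    rw [Submodule.coe_inner, ← hJiso, hJξ, real_inner_self_eq_norm_sq, hN, one_pow]
  have hskew := inner_compression_left (K := (ℝ ∙ N)ᗮ) hJ
  have hφξ : compression (ℝ ∙ N)ᗮ J ξ = 0 := by
    ext
    rw [hφ, hJξ, hξξ, one_smul, sub_self, Submodule.coe_zero]
  refine ⟨hξξ, fun x ↦ ?_, hskew⟩
  ext
  rw [hφ, hskew, hφξ, inner_zero_right, neg_zero, zero_smul, sub_zero, hφ, map_sub, map_smul, hJ2,
    Submodule.coe_sub, Submodule.coe_smul, hξ]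
  module

end Hypersurface

theorem stmt15_general {V : Type*} [NormedAddCommGroup V] [InnerProductSpace ℝ V]
    (J : V →ₗ[ℝ] V)
    (hJiso : ∀ x y : V, ⟪J x, J y⟫ = ⟪x, y⟫)
    (hJ2 : ∀ x : V, J (J x) = -x)
    (N : V) (hN : ‖N‖ = 1)
    (ξ : V) (hξ : ξ = -(J N))
    (η : V → ℝ) (hη : ∀ X : V, η X = ⟪X, ξ⟫)
    (φ : V → V) (hφ : ∀ X : V, φ X = J X - η X • N)
    (S : V →ₗ[ℝ] V)
    (hST : ∀ X : V, ⟪X, N⟫ = 0 → ⟪S X, N⟫ = 0)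
    (hSsa : ∀ X Y : V, ⟪X, N⟫ = 0 → ⟪Y, N⟫ = 0 → ⟪S X, Y⟫ = ⟪X, S Y⟫)
    (W : V) (hWN : ⟪W, N⟫ = 0) (hWξ : ⟪W, ξ⟫ = 0)
    (α : ℝ) (hHopfξ : S ξ = α • ξ)
    (a b c : ℝ)
    (hSφS : ∀ X : V, ⟪X, N⟫ = 0 →
      S (φ (S X)) = a • (φ (S X) + S (φ X)) + b • φ X
        + c • (⟪X, φ W⟫ • W - ⟪X, W⟫ • φ W)) :
    ∀ X : V, ⟪X, N⟫ = 0 → S (φ (S X)) + φ (S (φ (S (φ X)))) = 0 := by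
  have hT {X : V} : X ∈ (ℝ ∙ N)ᗮ ↔ ⟪X, N⟫ = 0 := Submodule.mem_orthogonal_singleton_iff_inner_left
  have hJ := inner_apply_left_of_isometry_of_sq_eq_neg hJiso hJ2
  let φT := compression (ℝ ∙ N)ᗮ J
  let ST : Module.End ℝ (ℝ ∙ N)ᗮ := S.restrict fun X hX ↦ hT.2 (hST X (hT.1 hX))
  let ξT : (ℝ ∙ N)ᗮ := ⟨ξ, hT.2 (by
    rw [hξ, inner_neg_left, inner_apply_self_eq_zero_of_skew hJ, neg_zero])⟩
  let WT : (ℝ ∙ N)ᗮ := ⟨W, hT.2 hWN⟩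
  have coe_φT (X : (ℝ ∙ N)ᗮ) : (φT X : V) = φ X := by
    rw [hφ, hη, hξ, coe_compression_eq_sub_inner_reeb hJ hN]
  have coe_ST (X : (ℝ ∙ N)ᗮ) : (ST X : V) = S X := rfl
  have hcontact : IsAlmostContactMetric φT ξT := isAlmostContactMetric_compression hJiso hJ2 hN hξ
  have hSTφTST : ST * φT * ST = a • (φT * ST + ST * φT) + b • φT + c • innerWedge WT (φT WT) := by
    ext X
    simpa [innerWedge_apply, coe_φT, coe_ST, real_inner_comm, WT] using hSφS X (hT.1 X.2)
  have hmem : ST * φT * ST ∈ horizontalCommutant ℝ φT :=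
    hcontact.mul_mul_mem_horizontalCommutant (fun X Y ↦ hSsa X Y (hT.1 X.2) (hT.1 Y.2))
      (Subtype.ext hHopfξ) hWξ hSTφTST
  intro X hX
  have hTX := LinearMap.congr_fun (mem_horizontalCommutant.1 hmem) ⟨X, hT.2 hX⟩
  rw [add_comm, ← eq_neg_iff_add_eq_zero]
  simpa [coe_φT, coe_ST] using congrArg Subtype.val hTX

theorem stmt15 {V : Type*} [NormedAddCommGroup V] [InnerProductSpace ℝ V]
    [FiniteDimensional ℝ V]
    (m : ℕ) (hm : 3 ≤ m) (hdim : Module.finrank ℝ V = 2 * m)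
    (J : V →ₗ[ℝ] V)
    (hJiso : ∀ x y : V, ⟪J x, J y⟫ = ⟪x, y⟫)
    (hJ2 : ∀ x : V, J (J x) = -x)
    (A : V →ₗ[ℝ] V)
    (hAsa : ∀ x y : V, ⟪A x, y⟫ = ⟪x, A y⟫)
    (hA2 : ∀ x : V, A (A x) = x)
    (hAJ : ∀ x : V, A (J x) = -(J (A x)))
    (N : V) (hN : ‖N‖ = 1)
    (ξ : V) (hξ : ξ = -(J N))
    (η : V → ℝ) (hη : ∀ X : V, η X = ⟪X, ξ⟫)
    (φ : V → V) (hφ : ∀ X : V, φ X = J X - η X • N)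
    (S : V →ₗ[ℝ] V)
    (hST : ∀ X : V, ⟪X, N⟫ = 0 → ⟪S X, N⟫ = 0)
    (hSsa : ∀ X Y : V, ⟪X, N⟫ = 0 → ⟪Y, N⟫ = 0 → ⟪S X, Y⟫ = ⟪X, S Y⟫)
    (hANN : ⟪A N, N⟫ = 0) (hANξ : ⟪A N, ξ⟫ = 0)
    (α : ℝ) (hHopfξ : S ξ = α • ξ)
    (h23 : ∀ X : V, ⟪X, N⟫ = 0 →
      S (φ (S X)) = (α / 2) • (φ (S X) + S (φ X)) + φ X
        - ⟪X, A N⟫ • A ξ + ⟪X, A ξ⟫ • A N) :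
    ∀ X : V, ⟪X, N⟫ = 0 → S (φ (S X)) + φ (S (φ (S (φ X)))) = 0 := by
  have hφAN : φ (A N) = A ξ := by
    rw [hφ, hη, hANξ, zero_smul, sub_zero, hξ, map_neg, hAJ, neg_neg]
  exact stmt15_general J hJiso hJ2 N hN ξ hξ η hη φ hφ S hST hSsa (A N) hANN hANξ α hHopfξ
    (α / 2) 1 1 fun X hX ↦ by rw [h23 X hX, hφAN]; module
end
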